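/- arXiv:2205.12738 — 2 statements merged into one kernel-verified Lean document; each statement's English description precedes it below -/
import Mathlib

section
/- Let n ≤ m be positive integers, q a prime power, and 0 < d ≤ n. Then the cardinality V_C(n,m,q,d) of the cover-metric ball of radius d in F_q^{m×n} satisfies q^{m·d} ≤ V_C(n,m,q,d) ≤ (d+1)·2^{(m+n)·H_2(d/(m+n))}·q^{m·d}, where H_2 is the binary entropy function. -/
/-- A cover of a matrix `A` is a set of lines (rows, encoded as `Sum.inl`, and
columns, encoded as `Sum.inr`) such that every nonzero entry of `A` lies in one
of these lines. -/
def IsCover {F : Type*} [Field F] {m n : ℕ} (A : Matrix (Fin m) (Fin n) F)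
    (S : Finset (Fin m ⊕ Fin n)) : Prop :=
  ∀ i j, A i j ≠ 0 → Sum.inl i ∈ S ∨ Sum.inr j ∈ S

/-- The cover weight of a matrix: the minimum cardinality of a cover. -/
noncomputable def coverWt {F : Type*} [Field F] {m n : ℕ}
    (A : Matrix (Fin m) (Fin n) F) : ℕ :=
  sInf {c | ∃ S : Finset (Fin m ⊕ Fin n), IsCover A S ∧ S.card = c}

/-- The binary entropy function `H_2`. -/
noncomputable def H2 (p : ℝ) : ℝ :=
  -p * Real.logb 2 p - (1 - p) * Real.logb 2 (1 - p)

/-!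
A matrix is covered by a set `S` of lines exactly when it is supported on the cells of those lines,
so the number of such matrices is `q` to the number of these cells. If `#S = d`, there are at most
`max m n * d` cells, with equality when `S` consists of `d` lines parallel to the longer side; this
gives the lower bound. For the upper bound, the ball is the union of these sets over the
`(m + n).choose d` choices of `S`, and `N.choose d ≤ 2 ^ (N * H2 (d / N))` because a single term of
`(p + (1 - p)) ^ N = 1`, at `p = d / N`, is at most `1`.
-/

lemma two_rpow_mul_H2 {p : ℝ} (hp₀ : 0 < p) (hp₁ : p < 1) (x : ℝ) :
    (2 : ℝ) ^ (x * H2 p) = (p ^ (x * p) * (1 - p) ^ (x * (1 - p)))⁻¹ := by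
  have two_rpow_logb_mul {r : ℝ} (hr : 0 < r) (y : ℝ) : (2 : ℝ) ^ (Real.logb 2 r * y) = r ^ y := by
    rw [Real.rpow_mul zero_le_two, Real.rpow_logb two_pos (by norm_num) hr]
  rw [← two_rpow_logb_mul hp₀, ← two_rpow_logb_mul (sub_pos.mpr hp₁), ← Real.rpow_add two_pos,
    ← Real.rpow_neg zero_le_two, H2]
  ring_nf

lemma choose_mul_pow_mul_one_sub_pow_le_one {p : ℝ} (hp₀ : 0 ≤ p) (hp₁ : p ≤ 1) {N k : ℕ}
    (hk : k ≤ N) : N.choose k * (p ^ k * (1 - p) ^ (N - k)) ≤ 1 := by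
  calc N.choose k * (p ^ k * (1 - p) ^ (N - k))
      = p ^ k * (1 - p) ^ (N - k) * N.choose k := mul_comm _ _
    _ ≤ ∑ i ∈ Finset.range (N + 1), p ^ i * (1 - p) ^ (N - i) * N.choose i :=
      Finset.single_le_sum (f := fun i ↦ p ^ i * (1 - p) ^ (N - i) * N.choose i)
        (fun i _ ↦ mul_nonneg (mul_nonneg (pow_nonneg hp₀ i) (pow_nonneg (sub_nonneg.mpr hp₁) _))
          (Nat.cast_nonneg _)) (Finset.mem_range_succ_iff.mpr hk)
    _ = 1 := by rw [← add_pow, add_sub_cancel, one_pow]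

lemma choose_le_two_rpow_mul_H2 {N k : ℕ} (hk : k ≤ N) :
    (N.choose k : ℝ) ≤ 2 ^ (N * H2 (k / N)) := by
  obtain rfl | hk₀ := k.eq_zero_or_pos
  · simp [H2]
  have hN : (0 : ℝ) < N := by exact_mod_cast hk₀.trans_le hk
  obtain rfl | hkN := hk.eq_or_lt
  · simp [H2, hN.ne']
  have hp₀ : (0 : ℝ) < k / N := by positivity
  have hp₁ : (k / N : ℝ) < 1 := (div_lt_one hN).mpr (by exact_mod_cast hkN)
  have hNp : (N : ℝ) * (k / N) = k := mul_div_cancel₀ _ hN.ne'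
  have hNq : (N : ℝ) * (1 - k / N) = (N - k : ℕ) := by rw [mul_one_sub, hNp, Nat.cast_sub hk]
  rw [two_rpow_mul_H2 hp₀ hp₁, hNp, hNq, Real.rpow_natCast, Real.rpow_natCast, ← one_div,
    le_div_iff₀ (mul_pos (pow_pos hp₀ k) (pow_pos (sub_pos.mpr hp₁) _))]
  exact choose_mul_pow_mul_one_sub_pow_le_one hp₀.le hp₁.le hk

section CoveredCells

variable {m n : ℕ}

/-- The cells of an `m × n` matrix lying on a set `S` of lines, encoded as in `IsCover`; `S` covers
a matrix when its nonzero entries all lie in these cells. -/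
def coveredCells (S : Finset (Fin m ⊕ Fin n)) : Finset (Fin m × Fin n) :=
  {c | Sum.inl c.1 ∈ S ∨ Sum.inr c.2 ∈ S}

lemma coveredCells_disjSum (I : Finset (Fin m)) (J : Finset (Fin n)) :
    coveredCells (I.disjSum J) = I ×ˢ Finset.univ ∪ Finset.univ ×ˢ J := by
  ext c
  simp [coveredCells]

lemma card_coveredCells_le (S : Finset (Fin m ⊕ Fin n)) :
    (coveredCells S).card ≤ max m n * S.card := by
  obtain ⟨I, J, rfl⟩ : ∃ I J, S = Finset.disjSum I J := ⟨_, _, S.toLeft_disjSum_toRight.symm⟩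
  calc (coveredCells (I.disjSum J)).card
      ≤ I.card * n + m * J.card := by
        simpa [coveredCells_disjSum] using
          Finset.card_union_le (I ×ˢ (Finset.univ : Finset (Fin n))) (Finset.univ ×ˢ J)
    _ ≤ I.card * max m n + max m n * J.card := by gcongr <;> simp
    _ = max m n * (I.disjSum J).card := by rw [Finset.card_disjSum]; ring

lemma exists_card_coveredCells_eq {d : ℕ} (hd : d ≤ min m n) :
    ∃ S : Finset (Fin m ⊕ Fin n), S.card = d ∧ (coveredCells S).card = max m n * d := by
  obtain ⟨hdm, hdn⟩ := le_min_iff.mp hd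
  obtain hnm | hmn := le_total n m
  · obtain ⟨J, -, hJ⟩ : ∃ J ⊆ (Finset.univ : Finset (Fin n)), J.card = d :=
      Finset.exists_subset_card_eq (by simpa using hdn)
    exact ⟨Finset.disjSum ∅ J, by simp [hJ], by rw [coveredCells_disjSum]; simp [hJ, hnm]⟩
  · obtain ⟨I, -, hI⟩ : ∃ I ⊆ (Finset.univ : Finset (Fin m)), I.card = d :=
      Finset.exists_subset_card_eq (by simpa using hdm)
    exact ⟨Finset.disjSum I ∅, by simp [hI],
      by rw [coveredCells_disjSum]; simp [hI, hmn, mul_comm]⟩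

end CoveredCells

section Cover

variable {F : Type*} [Field F] {m n d : ℕ}

lemma IsCover.mono {A : Matrix (Fin m) (Fin n) F} {S T : Finset (Fin m ⊕ Fin n)}
    (hS : IsCover A S) (hST : S ⊆ T) : IsCover A T :=
  fun i j hij ↦ (hS i j hij).imp (@hST _) (@hST _)

lemma IsCover.coverWt_le {A : Matrix (Fin m) (Fin n) F} {S : Finset (Fin m ⊕ Fin n)}
    (hS : IsCover A S) : coverWt A ≤ S.card :=
  Nat.sInf_le ⟨S, hS, rfl⟩

lemma exists_isCover_card_eq_coverWt (A : Matrix (Fin m) (Fin n) F) :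
    ∃ S, IsCover A S ∧ S.card = coverWt A :=
  Nat.sInf_mem (s := {c | ∃ S, IsCover A S ∧ S.card = c})
    ⟨_, Finset.univ, fun _ _ _ ↦ Or.inl (Finset.mem_univ _), rfl⟩

lemma setOf_coverWt_le_eq_biUnion (hd : d ≤ m + n) :
    {A : Matrix (Fin m) (Fin n) F | coverWt A ≤ d} =
      ⋃ S ∈ Finset.univ.powersetCard d, {A | IsCover A S} := by
  ext A
  simp only [Set.mem_ofPred_eq, Set.mem_iUnion, Finset.mem_powersetCard_univ, exists_prop]
  constructor
  · intro hA
    obtain ⟨S, hS, hcard⟩ := exists_isCover_card_eq_coverWt A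
    obtain ⟨T, hST, hT⟩ := Finset.exists_superset_card_eq (hcard.trans_le hA) (by simpa using hd)
    exact ⟨T, hT, hS.mono hST⟩
  · rintro ⟨S, rfl, hS⟩
    exact hS.coverWt_le

variable [Fintype F]

lemma ncard_setOf_isCover (S : Finset (Fin m ⊕ Fin n)) :
    {A : Matrix (Fin m) (Fin n) F | IsCover A S}.ncard =
      Fintype.card F ^ (coveredCells S).card := by
  classical
  let restrict : {A : Matrix (Fin m) (Fin n) F | IsCover A S} ≃ (coveredCells S → F) :=
    { toFun A c := A.1 c.1.1 c.1.2
      invFun f := ⟨fun i j ↦ if h : (i, j) ∈ coveredCells S then f ⟨(i, j), h⟩ else 0, by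
        intro i j hij
        by_contra h
        exact hij (dif_neg (by simpa [coveredCells] using h))⟩
      left_inv A := by
        ext i j
        by_cases h : (i, j) ∈ coveredCells S
        · simp [h]
        · have hij : A.1 i j = 0 := by
            by_contra hij
            exact h (by simpa [coveredCells] using A.2 i j hij)
          simp [h, hij]
      right_inv f := by
        ext c
        simp }
  rw [← Nat.card_coe_set_eq, Nat.card_congr restrict]
  simp

lemma ncard_setOf_coverWt_le_le (hd : d ≤ m + n) :
    {A : Matrix (Fin m) (Fin n) F | coverWt A ≤ d}.ncard ≤
      (m + n).choose d * Fintype.card F ^ (max m n * d) := by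
  have card_cells_le (S) (hS : S ∈ (Finset.univ : Finset (Fin m ⊕ Fin n)).powersetCard d) :
      (coveredCells S).card ≤ max m n * d := by
    simpa only [Finset.mem_powersetCard_univ.mp hS] using card_coveredCells_le S
  calc {A : Matrix (Fin m) (Fin n) F | coverWt A ≤ d}.ncard
      ≤ ∑ S ∈ Finset.univ.powersetCard d, {A : Matrix (Fin m) (Fin n) F | IsCover A S}.ncard := by
        rw [setOf_coverWt_le_eq_biUnion hd]
        exact Finset.set_ncard_biUnion_le _ _
    _ = ∑ S ∈ Finset.univ.powersetCard d, Fintype.card F ^ (coveredCells S).card := by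
        simp only [ncard_setOf_isCover]
    _ ≤ (Finset.univ.powersetCard d).card • Fintype.card F ^ (max m n * d) :=
        Finset.sum_le_card_nsmul _ _ _ fun S hS ↦
          Nat.pow_le_pow_right Fintype.card_pos (card_cells_le S hS)
    _ = (m + n).choose d * Fintype.card F ^ (max m n * d) := by simp

lemma le_ncard_setOf_coverWt_le (hd : d ≤ min m n) :
    Fintype.card F ^ (max m n * d) ≤
      {A : Matrix (Fin m) (Fin n) F | coverWt A ≤ d}.ncard := by
  obtain ⟨S, rfl, hcells⟩ := exists_card_coveredCells_eq hd
  rw [← hcells, ← ncard_setOf_isCover]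
  exact Set.ncard_le_ncard fun A hA ↦ hA.coverWt_le

end Cover

theorem coverBall_size_bounds_general {F : Type*} [Field F] [Fintype F] {m n d : ℕ}
    (hd : d ≤ min m n) :
    (Fintype.card F : ℝ) ^ (max m n * d) ≤
      (Nat.card {A : Matrix (Fin m) (Fin n) F | coverWt A ≤ d} : ℝ) ∧
    (Nat.card {A : Matrix (Fin m) (Fin n) F | coverWt A ≤ d} : ℝ) ≤
      2 ^ (((m : ℝ) + n) * H2 (d / (m + n))) * (Fintype.card F : ℝ) ^ (max m n * d) := by
  have hdmn : d ≤ m + n := by lia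
  have hchoose := choose_le_two_rpow_mul_H2 hdmn
  rw [Nat.cast_add] at hchoose
  rw [Nat.card_coe_set_eq]
  refine ⟨by exact_mod_cast le_ncard_setOf_coverWt_le hd, ?_⟩
  calc ({A : Matrix (Fin m) (Fin n) F | coverWt A ≤ d}.ncard : ℝ)
      ≤ (m + n).choose d * (Fintype.card F : ℝ) ^ (max m n * d) := by
        exact_mod_cast ncard_setOf_coverWt_le_le hdmn
    _ ≤ 2 ^ (((m : ℝ) + n) * H2 (d / (m + n))) * (Fintype.card F : ℝ) ^ (max m n * d) := by
        gcongr

/-- Bounds on the size `V_C(n,m,q,d)` of the cover-metric ball of radius `d`: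
`q^{m·d} ≤ V_C(n,m,q,d) ≤ (d+1)·2^{(m+n)·H_2(d/(m+n))}·q^{m·d}`. -/
theorem coverBall_size_bounds {F : Type*} [Field F] [Fintype F] {q m n d : ℕ}
    (hq : Fintype.card F = q) (hn : 0 < n) (hd : 0 < d) (hdn : d ≤ n) (hnm : n ≤ m) :
    (q : ℝ) ^ (m * d) ≤
      (Nat.card {A : Matrix (Fin m) (Fin n) F | coverWt A ≤ d} : ℝ) ∧
    (Nat.card {A : Matrix (Fin m) (Fin n) F | coverWt A ≤ d} : ℝ) ≤
      (d + 1) * 2 ^ (((m : ℝ) + n) * H2 (d / (m + n))) * (q : ℝ) ^ (m * d) := by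
  obtain ⟨hlower, hupper⟩ := by
    simpa only [max_eq_left hnm, hq] using
      coverBall_size_bounds_general (F := F) (le_min (hdn.trans hnm) hdn)
  exact ⟨hlower, hupper.trans <| mul_le_mul_of_nonneg_right
    (le_mul_of_one_le_left (by positivity) (by simp)) (by positivity)⟩
end

section
/- Let q be a prime power and let t_x, t_y be nonnegative integers with t = t_x + t_y ≤ min{m,n}. Fix a set of t_x rows and t_y columns of an m×n matrix. Then the number of matrices E ∈ F_q^{m×n} whose nonzero entries all lie in the chosen rows and columns and which have a unique minimal cover, equal exactly to the chosen set of t lines, is at least q^{t_x·t_y}·(q^{n−t_y} − (q−1)(n−t) − q^{t_x})^{t_x}·(q^{m−t_x} − (q−1)(m−t) − q^{t_y})^{t_y}. -/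
/-- The set of lines determined by a set of rows and a set of columns. -/
def lineSet {m n : ℕ} (Rows : Finset (Fin m)) (Cols : Finset (Fin n)) :
    Finset (Fin m ⊕ Fin n) :=
  Rows.image Sum.inl ∪ Cols.image Sum.inr

/-!
A cover that misses some of the chosen lines must make up for the missing rows with columns outside
the chosen ones, and for the missing columns with rows. So the chosen lines form the unique minimal
cover as soon as the supports of the chosen rows, outside the chosen columns, satisfy Hall's
condition with strict inequality, and likewise with rows and columns exchanged; the block where the
chosen rows and columns meet is arbitrary.

The rows are counted greedily: given a family with the strict Hall condition, a further vector
violates it only if it is zero or is supported in a tight set, i.e. a set with exactly one element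
more than it contains members of the family. By submodularity intersecting tight sets have a tight
union, so the maximal ones are pairwise disjoint, and the number of vectors supported in one of them
is largest when a single tight set absorbs as many members of the family as possible.
-/

open Finset
open scoped Matrix

section Covers

variable {I J F : Type*} [Zero F]

/-- The notion of `IsCover` for matrices with arbitrary index types, over any alphabet with a
zero. -/
def Covers (E : Matrix I J F) (S : Finset (I ⊕ J)) : Prop :=
  ∀ i j, E i j ≠ 0 → Sum.inl i ∈ S ∨ Sum.inr j ∈ S

/-- `S` is the unique minimal cover of `E`, expressed as: it is a cover, and all other covers are
strictly larger. -/
def IsUniqueMinCover (E : Matrix I J F) (S : Finset (I ⊕ J)) : Prop :=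
  Covers E S ∧ ∀ T, Covers E T → T ≠ S → #S < #T

theorem Covers.transpose {E : Matrix I J F} {R : Finset I} {C : Finset J}
    (h : Covers E (R.disjSum C)) : Covers Eᵀ (C.disjSum R) := fun j i hij => by
  simpa [or_comm] using h i j hij

end Covers

theorem coverWt_le_card {F : Type*} [Field F] {m n : ℕ} {E : Matrix (Fin m) (Fin n) F}
    {S : Finset (Fin m ⊕ Fin n)} (hS : IsCover E S) : coverWt E ≤ #S :=
  Nat.sInf_le ⟨S, hS, rfl⟩

theorem isUniqueMinCover_iff {F : Type*} [Field F] {m n : ℕ} {E : Matrix (Fin m) (Fin n) F}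
    {S : Finset (Fin m ⊕ Fin n)} :
    IsUniqueMinCover E S ↔
      IsCover E S ∧ coverWt E = #S ∧ ∀ T, IsCover E T → #T = #S → T = S := by
  constructor
  · rintro ⟨hS, hlt⟩
    refine ⟨hS, (coverWt_le_card hS).antisymm (le_csInf ⟨#S, S, hS, rfl⟩ ?_), fun T hT hcard => ?_⟩
    · rintro _ ⟨T, hT, rfl⟩
      rcases eq_or_ne T S with rfl | hne
      · exact le_rfl
      · exact (hlt T hT hne).le
    · by_contra hne
      exact (hlt T hT hne).ne' hcard
  · rintro ⟨hS, hwt, huniq⟩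
    exact ⟨hS, fun T hT hne =>
      (hwt.ge.trans (coverWt_le_card hT)).lt_of_ne fun h => hne (huniq T hT h.symm)⟩

theorem lineSet_eq_disjSum {m n : ℕ} (Rows : Finset (Fin m)) (Cols : Finset (Fin n)) :
    lineSet Rows Cols = Rows.disjSum Cols := by
  ext (i | j) <;> simp [lineSet]

theorem card_lineSet {m n : ℕ} (Rows : Finset (Fin m)) (Cols : Finset (Fin n)) :
    #(lineSet Rows Cols) = #Rows + #Cols := by
  rw [lineSet_eq_disjSum, card_disjSum]

section StrictHall

variable {ι α : Type*} [DecidableEq α] {t : ι → Finset α}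

/-- The strict form of Hall's condition for a family of finite sets. -/
def StrictHall (t : ι → Finset α) : Prop :=
  ∀ s : Finset ι, s.Nonempty → #s < #(s.biUnion t)

theorem StrictHall.comp_injective {κ : Type*} (ht : StrictHall t) {f : κ → ι}
    (hf : Function.Injective f) : StrictHall (t ∘ f) := by
  classical
  intro s hs
  have h := ht (s.image f) (hs.image f)
  rwa [card_image_of_injective s hf, image_biUnion] at h

theorem StrictHall.of_isEmpty [IsEmpty ι] (t : ι → Finset α) : StrictHall t :=
  fun s hs => (hs.ne_empty s.eq_empty_of_isEmpty).elim

theorem StrictHall.ne_empty (ht : StrictHall t) (i : ι) : t i ≠ ∅ := by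
  intro hi
  simpa [hi] using ht {i} (singleton_nonempty i)

variable [Fintype ι]

/-- The indices of the members of the family `t` contained in `U`. -/
def indicesWithin (t : ι → Finset α) (U : Finset α) : Finset ι := {i | t i ⊆ U}

@[simp]
theorem mem_indicesWithin {U : Finset α} {i : ι} : i ∈ indicesWithin t U ↔ t i ⊆ U := by
  simp [indicesWithin]

/-- The sets for which `StrictHall.card_indicesWithin_lt` is as close to an equality as possible:
these are the obstructions to enlarging a family without losing the strict Hall condition. -/
def IsTight (t : ι → Finset α) (U : Finset α) : Prop :=
  #U = #(indicesWithin t U) + 1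

theorem StrictHall.card_indicesWithin_lt (ht : StrictHall t) {U : Finset α} (hU : U.Nonempty) :
    #(indicesWithin t U) < #U := by
  rcases (indicesWithin t U).eq_empty_or_nonempty with h | h
  · simpa [h] using hU
  · exact (ht _ h).trans_le (card_le_card (biUnion_subset.2 fun i hi => mem_indicesWithin.1 hi))

theorem indicesWithin_inter [DecidableEq ι] (t : ι → Finset α) (U V : Finset α) :
    indicesWithin t (U ∩ V) = indicesWithin t U ∩ indicesWithin t V := by
  ext i
  simp [subset_inter_iff]

theorem union_indicesWithin_subset [DecidableEq ι] (t : ι → Finset α) (U V : Finset α) :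
    indicesWithin t U ∪ indicesWithin t V ⊆ indicesWithin t (U ∪ V) := by
  intro i hi
  simp only [mem_union, mem_indicesWithin] at hi ⊢
  exact hi.elim (fun h => h.trans subset_union_left) fun h => h.trans subset_union_right

theorem IsTight.union (ht : StrictHall t) {U V : Finset α} (hU : IsTight t U) (hV : IsTight t V)
    (hUV : (U ∩ V).Nonempty) : IsTight t (U ∪ V) := by
  classical
  have hinter := ht.card_indicesWithin_lt hUV
  have hunion := ht.card_indicesWithin_lt (hUV.mono inter_subset_union)
  have hsup := card_le_card (union_indicesWithin_subset t U V)
  have hsets := card_union_add_card_inter U V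
  have hindices := card_union_add_card_inter (indicesWithin t U) (indicesWithin t V)
  rw [← indicesWithin_inter] at hindices
  unfold IsTight at hU hV ⊢
  omega

theorem StrictHall.disjoint_of_maximal_isTight (ht : StrictHall t) {U V : Finset α}
    (hU : Maximal (IsTight t) U) (hV : Maximal (IsTight t) V) (hne : U ≠ V) : Disjoint U V := by
  by_contra h
  have hUV := hU.prop.union ht hV.prop (not_disjoint_iff_nonempty_inter.1 h)
  exact hne ((hU.eq_of_le hUV subset_union_left).trans
    (hV.eq_of_le hUV subset_union_right).symm)

theorem StrictHall.disjoint_indicesWithin (ht : StrictHall t) {U V : Finset α}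
    (hUV : Disjoint U V) : Disjoint (indicesWithin t U) (indicesWithin t V) := by
  classical
  rw [disjoint_iff_inter_eq_empty, ← indicesWithin_inter, disjoint_iff_inter_eq_empty.1 hUV]
  refine eq_empty_of_forall_notMem fun i hi => ht.ne_empty i ?_
  exact subset_empty.1 (mem_indicesWithin.1 hi)

theorem StrictHall.sum_card_indicesWithin_le (ht : StrictHall t) {P : Finset (Finset α)}
    (hP : (P : Set (Finset α)).PairwiseDisjoint id) :
    ∑ U ∈ P, #(indicesWithin t U) ≤ Fintype.card ι := by
  classical
  have hdisj : (P : Set (Finset α)).PairwiseDisjoint (indicesWithin t) := fun U hU V hV hne =>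
    ht.disjoint_indicesWithin (hP hU hV hne)
  exact (card_biUnion hdisj).symm.trans_le (card_le_univ _)

theorem StrictHall.cons {k : ℕ} {t : Fin k → Finset α} (ht : StrictHall t) {u : Finset α}
    (hu : u.Nonempty) (htight : ∀ U, IsTight t U → ¬ u ⊆ U) :
    StrictHall (Fin.cons u t : Fin (k + 1) → Finset α) := by
  intro s hs
  set s' : Finset (Fin k) := {i | i.succ ∈ s}
  have hcard : #s = if 0 ∈ s then #s' + 1 else #s' := by
    simpa using Fin.card_filter_univ_succ (fun i => i ∈ s)
  have hsub : s'.biUnion t ⊆ s.biUnion (Fin.cons u t) := biUnion_subset.2 fun i hi =>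
    subset_biUnion_of_mem (Fin.cons u t : Fin (k + 1) → Finset α) (mem_filter.1 hi).2
  by_cases h0 : 0 ∈ s
  · set U := s.biUnion (Fin.cons u t)
    have huU : u ⊆ U := subset_biUnion_of_mem (Fin.cons u t : Fin (k + 1) → Finset α) h0
    have hle : #s' ≤ #(indicesWithin t U) := card_le_card fun i hi =>
      mem_indicesWithin.2 ((subset_biUnion_of_mem t hi).trans hsub)
    have hlt := ht.card_indicesWithin_lt (hu.mono huU)
    have hne : #U ≠ #(indicesWithin t U) + 1 := fun h => htight U h huU
    rw [if_pos h0] at hcard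
    omega
  · rw [if_neg h0] at hcard
    rw [hcard]
    exact (ht s' (card_pos.1 (hcard ▸ hs.card_pos))).trans_le (card_le_card hsub)

end StrictHall

section Arithmetic

variable {R : Type*} [CommRing R] [LinearOrder R] [IsStrictOrderedRing R] {q : R}

theorem mul_sub_one_add_pow_le_pow_add (hq : 1 ≤ q) (a d : ℕ) :
    d * (q - 1) + q ^ a ≤ q ^ (a + d) := by
  have hbern : 1 + d * (q - 1) ≤ q ^ d := one_add_mul_sub_le_pow (by linarith) d
  have hpow : 1 ≤ q ^ a := one_le_pow₀ hq
  have hd : 0 ≤ d * (q - 1) := mul_nonneg d.cast_nonneg (sub_nonneg.2 hq)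
  rw [pow_add]
  nlinarith

theorem sum_pow_sub_one_le {β : Type*} (hq : 1 ≤ q) (P : Finset β) (g : β → ℕ) :
    ∑ x ∈ P, (q ^ g x - 1) ≤ q ^ (∑ x ∈ P, g x) - 1 := by
  classical
  induction P using Finset.induction_on with
  | empty => simp
  | insert x P hx ih =>
    rw [sum_insert hx, sum_insert hx, pow_add]
    have hx1 : 1 ≤ q ^ g x := one_le_pow₀ hq
    have hP1 : 1 ≤ q ^ ∑ x ∈ P, g x := one_le_pow₀ hq
    nlinarith [mul_nonneg (sub_nonneg.2 hx1) (sub_nonneg.2 hP1)]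

theorem sum_pow_succ_sub_one_add_one_le {β : Type*} (hq : 1 ≤ q) {P : Finset β} {g : β → ℕ}
    {N k : ℕ} (hN : ∑ x ∈ P, (g x + 1) ≤ N) (hk : ∑ x ∈ P, g x < k) :
    ∑ x ∈ P, (q ^ (g x + 1) - 1) + 1 ≤ (q - 1) * (N - k) + q ^ k := by
  set G := ∑ x ∈ P, g x
  obtain ⟨d, rfl⟩ := Nat.exists_eq_add_of_le (Nat.succ_le_of_lt hk)
  have hP : (#P : R) + G ≤ N := by
    rw [sum_add_distrib, ← card_eq_sum_ones] at hN
    exact_mod_cast add_comm G #P ▸ hN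
  have hmul : (q - 1) * (#P - 1) ≤ (q - 1) * (N - (G + 1 : R)) :=
    mul_le_mul_of_nonneg_left (by linarith) (sub_nonneg.2 hq)
  calc ∑ x ∈ P, (q ^ (g x + 1) - 1) + 1
      = q * ∑ x ∈ P, (q ^ g x - 1) + #P * (q - 1) + 1 := by
        rw [mul_sum, ← nsmul_eq_mul, ← sum_const, ← sum_add_distrib]
        exact congrArg (· + 1) (sum_congr rfl fun x _ => by ring)
    _ ≤ q * (q ^ G - 1) + #P * (q - 1) + 1 := by
        have := mul_le_mul_of_nonneg_left (sum_pow_sub_one_le hq P g) (zero_le_one.trans hq)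
        linarith
    _ = (q - 1) * (#P - 1) + q ^ (G + 1) := by ring
    _ ≤ (q - 1) * (N - (G + 1 : R)) + q ^ (G + 1) := by linarith
    _ = (q - 1) * (N - (G + 1 + d : R)) + (d * (q - 1) + q ^ (G + 1)) := by ring
    _ ≤ (q - 1) * (N - (G + 1 + d : ℕ)) + q ^ (G + 1 + d) := by
        push_cast
        linarith [mul_sub_one_add_pow_le_pow_add hq (G + 1) d]

end Arithmetic

section Counting

variable {α F : Type*} [Fintype α] [Zero F] [DecidableEq F]

/-- The support of a vector, as a `Finset`. -/
def nonzeros (v : α → F) : Finset α := {j | v j ≠ 0}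

@[simp]
theorem mem_nonzeros {v : α → F} {j : α} : j ∈ nonzeros v ↔ v j ≠ 0 := by
  simp [nonzeros]

theorem nonzeros_nonempty {v : α → F} : (nonzeros v).Nonempty ↔ v ≠ 0 := by
  simp [Finset.Nonempty, Function.ne_iff]

variable [Fintype F]

theorem card_nonzeros_subset [DecidableEq α] (U : Finset α) :
    #{v : α → F | nonzeros v ⊆ U} = Fintype.card F ^ #U := by
  have h : ({v : α → F | nonzeros v ⊆ U} : Finset (α → F)) =
      Fintype.piFinset fun j => if j ∈ U then univ else {0} := by
    ext v
    simp only [mem_filter_univ, Fintype.mem_piFinset, subset_iff, mem_nonzeros]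
    refine forall_congr' fun j => ?_
    by_cases hj : j ∈ U <;> simp [hj]
  rw [h, Fintype.card_piFinset]
  simp [apply_ite Finset.card]

theorem card_ne_zero_nonzeros_subset [DecidableEq α] (U : Finset α) :
    (#{v : α → F | v ≠ 0 ∧ nonzeros v ⊆ U} : ℤ) = (Fintype.card F : ℤ) ^ #U - 1 := by
  have h : ({v : α → F | v ≠ 0 ∧ nonzeros v ⊆ U} : Finset (α → F)) =
      ({v : α → F | nonzeros v ⊆ U} : Finset (α → F)).erase 0 := by
    ext v
    simp
  rw [h, cast_card_erase_of_mem (by simp [nonzeros]), card_nonzeros_subset, Nat.cast_pow]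

/-- The lower bound of `extensionBound_le_ncard_strictHall_cons` for the number of vectors of
length `N` over an alphabet of size `q` that preserve the strict Hall condition when added to
fewer than `k` others. -/
def extensionBound (q : ℤ) (N k : ℕ) : ℤ := q ^ N - (q - 1) * (N - k) - q ^ k

theorem extensionBound_nonneg {q : ℤ} (hq : 1 ≤ q) {N k : ℕ} (hk : k ≤ N) :
    0 ≤ extensionBound q N k := by
  have h := mul_sub_one_add_pow_le_pow_add hq k (N - k)
  rw [Nat.add_sub_cancel' hk, Nat.cast_sub hk] at h
  unfold extensionBound
  linarith

theorem ncard_eq_zero_or_subset_mem_le (P : Finset (Finset α)) :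
    ({v : α → F | v = 0 ∨ ∃ U ∈ P, nonzeros v ⊆ U}.ncard : ℤ) ≤
      ∑ U ∈ P, ((Fintype.card F : ℤ) ^ #U - 1) + 1 := by
  classical
  let W (U : Finset α) : Finset (α → F) := {v | v ≠ 0 ∧ nonzeros v ⊆ U}
  have hsub : {v : α → F | v = 0 ∨ ∃ U ∈ P, nonzeros v ⊆ U} ⊆ ↑(insert 0 (P.biUnion W)) := by
    intro v hv
    by_cases hv0 : v = 0
    · exact hv0 ▸ mem_insert_self _ _
    · obtain ⟨U, hU, hvU⟩ := hv.resolve_left hv0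
      exact mem_insert_of_mem (mem_biUnion.2 ⟨U, hU, (mem_filter_univ v).2 ⟨hv0, hvU⟩⟩)
  have hle : {v : α → F | v = 0 ∨ ∃ U ∈ P, nonzeros v ⊆ U}.ncard ≤ ∑ U ∈ P, #(W U) + 1 := by
    refine (Set.ncard_le_ncard hsub).trans ?_
    rw [Set.ncard_coe_finset]
    exact (card_insert_le _ _).trans (Nat.add_le_add_right card_biUnion_le 1)
  simp only [← card_ne_zero_nonzeros_subset]
  exact_mod_cast hle

variable [DecidableEq α]

theorem ncard_eq_zero_or_subset_isTight_le {ι : Type*} [Fintype ι] {t : ι → Finset α}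
    (ht : StrictHall t) {k : ℕ} (hk : Fintype.card ι < k) :
    ({v : α → F | v = 0 ∨ ∃ U, IsTight t U ∧ nonzeros v ⊆ U}.ncard : ℤ) ≤
      (Fintype.card F - 1) * (Fintype.card α - k) + Fintype.card F ^ k := by
  classical
  let P : Finset (Finset α) := {U | Maximal (IsTight t) U}
  have hmax {U} (hU : U ∈ P) : Maximal (IsTight t) U := (mem_filter_univ U).1 hU
  have hdisj : (P : Set (Finset α)).PairwiseDisjoint id := fun U hU V hV =>
    ht.disjoint_of_maximal_isTight (hmax hU) (hmax hV)
  have hcard : ∀ U ∈ P, #U = #(indicesWithin t U) + 1 := fun U hU => (hmax hU).prop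
  have hN : ∑ U ∈ P, (#(indicesWithin t U) + 1) ≤ Fintype.card α := by
    rw [← sum_congr rfl hcard]
    exact (card_biUnion hdisj).symm.trans_le (card_le_univ _)
  have hsub : {v : α → F | v = 0 ∨ ∃ U, IsTight t U ∧ nonzeros v ⊆ U} ⊆
      {v | v = 0 ∨ ∃ U ∈ P, nonzeros v ⊆ U} := by
    rintro v (rfl | ⟨U, hU, hvU⟩)
    · exact Or.inl rfl
    · obtain ⟨V, hUV, hV⟩ := Finite.exists_le_maximal hU
      exact Or.inr ⟨V, (mem_filter_univ V).2 hV, hvU.trans hUV⟩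
  calc ({v : α → F | v = 0 ∨ ∃ U, IsTight t U ∧ nonzeros v ⊆ U}.ncard : ℤ)
      ≤ {v : α → F | v = 0 ∨ ∃ U ∈ P, nonzeros v ⊆ U}.ncard :=
        Int.ofNat_le.2 (Set.ncard_le_ncard hsub)
    _ ≤ ∑ U ∈ P, ((Fintype.card F : ℤ) ^ #U - 1) + 1 := ncard_eq_zero_or_subset_mem_le P
    _ = ∑ U ∈ P, ((Fintype.card F : ℤ) ^ (#(indicesWithin t U) + 1) - 1) + 1 := by
        rw [sum_congr rfl fun U hU => by rw [hcard U hU]]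
    _ ≤ _ := sum_pow_succ_sub_one_add_one_le (mod_cast Fintype.card_pos) hN
        ((ht.sum_card_indicesWithin_le hdisj).trans_lt hk)

theorem extensionBound_le_ncard_strictHall_cons {i k : ℕ} (hik : i < k) {t : Fin i → Finset α}
    (ht : StrictHall t) :
    extensionBound (Fintype.card F) (Fintype.card α) k ≤
      {v : α → F | StrictHall (Fin.cons (nonzeros v) t : Fin (i + 1) → Finset α)}.ncard := by
  set bad := {v : α → F | v = 0 ∨ ∃ U, IsTight t U ∧ nonzeros v ⊆ U} with hbad
  have hbad_le := ncard_eq_zero_or_subset_isTight_le (F := F) ht ((Fintype.card_fin i).trans_lt hik)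
  have hgood : badᶜ ⊆ {v | StrictHall (Fin.cons (nonzeros v) t : Fin (i + 1) → Finset α)} := by
    intro v hv
    simp only [hbad, Set.mem_compl_iff, Set.mem_ofPred_eq, not_or, not_exists, not_and] at hv
    exact ht.cons (nonzeros_nonempty.2 hv.1) hv.2
  have hcompl : (bad.ncard : ℤ) + badᶜ.ncard = Fintype.card F ^ Fintype.card α := by
    have h := Set.ncard_add_ncard_compl bad
    rw [Nat.card_eq_fintype_card, Fintype.card_fun] at h
    exact_mod_cast h
  have hgood_le : (badᶜ.ncard : ℤ) ≤ _ := Int.ofNat_le.2 (Set.ncard_le_ncard hgood)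
  unfold extensionBound
  linarith

theorem pow_le_ncard_of_forall_le_ncard_cons {R V : Type*} [CommSemiring R] [PartialOrder R]
    [IsOrderedRing R] [Finite V] {p : ∀ n, (Fin n → V) → Prop} {B : R} (hB : 0 ≤ B) {k : ℕ}
    (hzero : ∀ x, p 0 x)
    (hcons : ∀ i < k, ∀ x, p i x → B ≤ ({v | p (i + 1) (Fin.cons v x)} : Set V).ncard) :
    B ^ k ≤ ({x | p k x} : Set (Fin k → V)).ncard := by
  classical
  induction k with
  | zero => simp [hzero]
  | succ k ih =>
    have ih := ih fun i hi => hcons i (hi.trans k.lt_succ_self)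
    have := Fintype.ofFinite {x | p k x}
    let f (y : Σ x : {x | p k x}, {v | p (k + 1) (Fin.cons v x.1)}) : {x | p (k + 1) x} :=
      ⟨Fin.cons y.2.1 y.1.1, y.2.2⟩
    have hf : Function.Injective f := by
      rintro ⟨⟨x, hx⟩, v, hv⟩ ⟨⟨x', hx'⟩, v', hv'⟩ h
      have hcons : (Fin.cons v x : Fin (k + 1) → V) = Fin.cons v' x' := congrArg Subtype.val h
      obtain ⟨rfl, rfl⟩ := Fin.cons_injective2 hcons
      rfl
    calc B ^ (k + 1) = B ^ k * B := pow_succ B k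
      _ ≤ ({x | p k x} : Set (Fin k → V)).ncard * B := mul_le_mul_of_nonneg_right ih hB
      _ = ∑ _x : {x | p k x}, B := by
        rw [sum_const, card_univ, nsmul_eq_mul, ← Nat.card_eq_fintype_card, Nat.card_coe_set_eq]
      _ ≤ ∑ x : {x | p k x}, (({v | p (k + 1) (Fin.cons v x.1)} : Set V).ncard : R) :=
        sum_le_sum fun x _ => hcons k k.lt_succ_self x x.2
      _ = (Nat.card (Σ x : {x | p k x}, {v | p (k + 1) (Fin.cons v x.1)}) : R) := by
        rw [Nat.card_sigma, Nat.cast_sum]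
        rfl
      _ ≤ ({x | p (k + 1) x} : Set (Fin (k + 1) → V)).ncard :=
        Nat.mono_cast (Nat.card_le_card_of_injective f hf)

theorem extensionBound_pow_le_ncard_strictHall_fin {k : ℕ} (hk : k ≤ Fintype.card α) :
    extensionBound (Fintype.card F) (Fintype.card α) k ^ k ≤
      ({M | StrictHall fun i => nonzeros (M i)} : Set (Fin k → α → F)).ncard := by
  refine pow_le_ncard_of_forall_le_ncard_cons (p := fun n M => StrictHall fun i => nonzeros (M i))
    (extensionBound_nonneg (mod_cast Fintype.card_pos) hk) (fun M => StrictHall.of_isEmpty _)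
    fun i hik M hM => ?_
  have hcons (v : α → F) : (fun j => nonzeros ((Fin.cons v M : Fin (i + 1) → α → F) j)) =
      Fin.cons (nonzeros v) fun j => nonzeros (M j) :=
    Fin.comp_cons nonzeros v M
  simpa only [hcons] using extensionBound_le_ncard_strictHall_cons (F := F) hik hM

theorem extensionBound_pow_le_ncard_strictHall {ι : Type*} [Fintype ι]
    (h : Fintype.card ι ≤ Fintype.card α) :
    extensionBound (Fintype.card F) (Fintype.card α) (Fintype.card ι) ^ Fintype.card ι ≤
      ({M | StrictHall fun i => nonzeros (M i)} : Set (Matrix ι α F)).ncard := by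
  refine (extensionBound_pow_le_ncard_strictHall_fin h).trans (Int.ofNat_le.2 ?_)
  let e := Fintype.equivFin ι
  exact Set.ncard_le_ncard_of_injOn (fun M => M ∘ e)
    (fun M (hM : StrictHall _) => hM.comp_injective e.injective)
    e.surjective.injective_comp_right.injOn

end Counting

section CrossMatrices

variable {I J F : Type*} [DecidableEq I] [DecidableEq J] [Zero F]
  {Rows : Finset I} {Cols : Finset J}

theorem Covers.card_sdiff_lt [Fintype J] [DecidableEq F] {E : Matrix I J F} {R : Finset I}
    {C : Finset J} (hcov : Covers E (R.disjSum C))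
    (hHall : StrictHall fun i => nonzeros (E.toBlock (· ∈ Rows) (· ∉ Cols) i))
    (hne : (Rows \ R).Nonempty) : #(Rows \ R) < #(C \ Cols) := by
  set s := (Rows \ R).subtype (· ∈ Rows)
  have hs_card : #s = #(Rows \ R) := by
    rw [card_subtype, filter_true_of_mem fun i hi => (mem_sdiff.1 hi).1]
  have hU_card : #((C \ Cols).subtype (· ∉ Cols)) = #(C \ Cols) := by
    rw [card_subtype, filter_true_of_mem fun j hj => (mem_sdiff.1 hj).2]
  rw [← hs_card, ← hU_card]
  refine (hHall s (card_pos.1 (hs_card ▸ hne.card_pos))).trans_le (card_le_card ?_)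
  refine biUnion_subset.2 fun i hi j hj => ?_
  have hiR : i.1 ∉ R := (mem_sdiff.1 (mem_subtype.1 hi)).2
  have hij := hcov i j (by simpa using hj)
  rw [inl_mem_disjSum, inr_mem_disjSum] at hij
  exact mem_subtype.2 (mem_sdiff.2 ⟨hij.resolve_left hiR, j.2⟩)

theorem Covers.isUniqueMinCover_of_strictHall [Fintype I] [Fintype J] [DecidableEq F]
    {E : Matrix I J F} (hE : Covers E (Rows.disjSum Cols))
    (hRows : StrictHall fun i => nonzeros (E.toBlock (· ∈ Rows) (· ∉ Cols) i))
    (hCols : StrictHall fun j => nonzeros (Eᵀ.toBlock (· ∈ Cols) (· ∉ Rows) j)) :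
    IsUniqueMinCover E (Rows.disjSum Cols) := by
  refine ⟨hE, fun T hT hne => ?_⟩
  by_cases hsub : Rows.disjSum Cols ⊆ T
  · exact card_lt_card (hsub.ssubset_of_ne hne.symm)
  obtain ⟨R, C, rfl⟩ : ∃ (R : Finset I) (C : Finset J), T = R.disjSum C :=
    ⟨_, _, toLeft_disjSum_toRight.symm⟩
  have hR : Rows \ R = ∅ ∨ #(Rows \ R) < #(C \ Cols) :=
    (eq_empty_or_nonempty _).imp_right (hT.card_sdiff_lt hRows)
  have hC : Cols \ C = ∅ ∨ #(Cols \ C) < #(R \ Rows) :=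
    (eq_empty_or_nonempty _).imp_right (hT.transpose.card_sdiff_lt hCols)
  have hmissing : ¬(Rows \ R = ∅ ∧ Cols \ C = ∅) := fun h => hsub
    (disjSum_mono (sdiff_eq_empty_iff_subset.1 h.1) (sdiff_eq_empty_iff_subset.1 h.2))
  have hcardR : #(Rows \ R) + #R = #(R \ Rows) + #Rows := by
    rw [card_sdiff_add_card, card_sdiff_add_card, union_comm]
  have hcardC : #(Cols \ C) + #C = #(C \ Cols) + #Cols := by
    rw [card_sdiff_add_card, card_sdiff_add_card, union_comm]
  rw [card_disjSum, card_disjSum]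
  simp only [← card_eq_zero] at hR hC hmissing
  omega

/-- The matrix supported on the rows in `Rows` and the columns in `Cols` with the given blocks;
the columns of the block below `Cols` are passed as the rows of `C`. -/
def crossMatrix (A : Matrix {i // i ∈ Rows} {j // j ∈ Cols} F)
    (B : Matrix {i // i ∈ Rows} {j // j ∉ Cols} F)
    (C : Matrix {j // j ∈ Cols} {i // i ∉ Rows} F) : Matrix I J F :=
  (Matrix.fromBlocks A B Cᵀ 0).reindex
    (Equiv.sumCompl (· ∈ Rows)) (Equiv.sumCompl (· ∈ Cols))

section Blocks

variable (A : Matrix {i // i ∈ Rows} {j // j ∈ Cols} F)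
  (B : Matrix {i // i ∈ Rows} {j // j ∉ Cols} F) (C : Matrix {j // j ∈ Cols} {i // i ∉ Rows} F)

theorem covers_crossMatrix : Covers (crossMatrix A B C) (Rows.disjSum Cols) := by
  intro i j hij
  by_contra! h
  simp only [inl_mem_disjSum, inr_mem_disjSum] at h
  exact hij (by simp [crossMatrix, h.1, h.2])

theorem toBlock_crossMatrix : (crossMatrix A B C).toBlock (· ∈ Rows) (· ∉ Cols) = B := by
  ext i j
  simp [crossMatrix]

theorem toBlock_transpose_crossMatrix :
    (crossMatrix A B C)ᵀ.toBlock (· ∈ Cols) (· ∉ Rows) = C := by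
  ext j i
  simp [crossMatrix]

variable {A B C} in
theorem crossMatrix_inj {A' : Matrix {i // i ∈ Rows} {j // j ∈ Cols} F}
    {B' : Matrix {i // i ∈ Rows} {j // j ∉ Cols} F}
    {C' : Matrix {j // j ∈ Cols} {i // i ∉ Rows} F} :
    crossMatrix A B C = crossMatrix A' B' C' ↔ A = A' ∧ B = B' ∧ C = C' := by
  rw [crossMatrix, crossMatrix, (Matrix.reindex _ _).injective.eq_iff, Matrix.fromBlocks_inj]
  simp

end Blocks

theorem card_blocks_le_ncard_isUniqueMinCover [Fintype I] [Fintype J] [Fintype F]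
    [DecidableEq F] (Rows : Finset I) (Cols : Finset J) :
    Fintype.card F ^ (#Rows * #Cols) *
        ({B | StrictHall fun i => nonzeros (B i)} :
          Set (Matrix {i // i ∈ Rows} {j // j ∉ Cols} F)).ncard *
        ({C | StrictHall fun j => nonzeros (C j)} :
          Set (Matrix {j // j ∈ Cols} {i // i ∉ Rows} F)).ncard ≤
      ({E | IsUniqueMinCover E (Rows.disjSum Cols)} : Set (Matrix I J F)).ncard := by
  let f (x : Matrix {i // i ∈ Rows} {j // j ∈ Cols} F ×
      {B : Matrix {i // i ∈ Rows} {j // j ∉ Cols} F | StrictHall fun i => nonzeros (B i)} ×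
      {C : Matrix {j // j ∈ Cols} {i // i ∉ Rows} F | StrictHall fun j => nonzeros (C j)}) :
      {E : Matrix I J F | IsUniqueMinCover E (Rows.disjSum Cols)} :=
    ⟨crossMatrix x.1 x.2.1 x.2.2, (covers_crossMatrix _ _ _).isUniqueMinCover_of_strictHall
      (by rw [toBlock_crossMatrix]; exact x.2.1.2)
      (by rw [toBlock_transpose_crossMatrix]; exact x.2.2.2)⟩
  have hf : Function.Injective f := by
    rintro ⟨A, ⟨B, hB⟩, C, hC⟩ ⟨A', ⟨B', hB'⟩, C', hC'⟩ h
    obtain ⟨rfl, rfl, rfl⟩ := crossMatrix_inj.1 (congrArg Subtype.val h)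
    rfl
  have hA : Nat.card (Matrix {i // i ∈ Rows} {j // j ∈ Cols} F) =
      Fintype.card F ^ (#Rows * #Cols) := by
    simp [Matrix, ← pow_mul, mul_comm]
  have h := Nat.card_le_card_of_injective f hf
  rwa [Nat.card_prod, Nat.card_prod, hA, ← mul_assoc] at h

end CrossMatrices

theorem unique_minimal_cover_count_general {I J F : Type*} [Fintype I] [Fintype J] [Zero F]
    [Fintype F] (Rows : Finset I) (Cols : Finset J) (hI : #Rows + #Cols ≤ Fintype.card I)
    (hJ : #Rows + #Cols ≤ Fintype.card J) :
    (Fintype.card F : ℤ) ^ (#Rows * #Cols) *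
        ((Fintype.card F : ℤ) ^ (Fintype.card J - #Cols) -
          ((Fintype.card F : ℤ) - 1) * (Fintype.card J - (#Rows + #Cols : ℕ)) -
          (Fintype.card F : ℤ) ^ #Rows) ^ #Rows *
        ((Fintype.card F : ℤ) ^ (Fintype.card I - #Rows) -
          ((Fintype.card F : ℤ) - 1) * (Fintype.card I - (#Rows + #Cols : ℕ)) -
          (Fintype.card F : ℤ) ^ #Cols) ^ #Cols ≤
      ({E | IsUniqueMinCover E (Rows.disjSum Cols)} : Set (Matrix I J F)).ncard := by
  classical
  have hrowsCard : Fintype.card {i // i ∉ Rows} = Fintype.card I - #Rows := by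
    simp [Fintype.card_subtype_compl]
  have hcolsCard : Fintype.card {j // j ∉ Cols} = Fintype.card J - #Cols := by
    simp [Fintype.card_subtype_compl]
  have hB := extensionBound_pow_le_ncard_strictHall (F := F) (α := {j // j ∉ Cols})
    (ι := {i // i ∈ Rows}) (by rw [hcolsCard, Fintype.card_coe]; omega)
  have hC := extensionBound_pow_le_ncard_strictHall (F := F) (α := {i // i ∉ Rows})
    (ι := {j // j ∈ Cols}) (by rw [hrowsCard, Fintype.card_coe]; omega)
  have hC0 : 0 ≤ extensionBound (Fintype.card F) (Fintype.card I - #Rows) #Cols :=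
    extensionBound_nonneg (mod_cast Fintype.card_pos) (by omega)
  rw [hcolsCard, Fintype.card_coe] at hB
  rw [hrowsCard, Fintype.card_coe] at hC
  have hJsub : ((Fintype.card J : ℤ) - (#Rows + #Cols : ℕ)) =
      (Fintype.card J - #Cols : ℕ) - #Rows := by omega
  have hIsub : ((Fintype.card I : ℤ) - (#Rows + #Cols : ℕ)) =
      (Fintype.card I - #Rows : ℕ) - #Cols := by omega
  rw [hJsub, hIsub]
  calc (Fintype.card F : ℤ) ^ (#Rows * #Cols) *
        extensionBound (Fintype.card F) (Fintype.card J - #Cols) #Rows ^ #Rows *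
        extensionBound (Fintype.card F) (Fintype.card I - #Rows) #Cols ^ #Cols
      ≤ _ := mul_le_mul (mul_le_mul_of_nonneg_left hB (by positivity)) hC (pow_nonneg hC0 _)
        (by positivity)
    _ ≤ _ := mod_cast card_blocks_le_ncard_isUniqueMinCover (F := F) Rows Cols

/-- Counting matrices with a unique minimal cover: for a fixed choice of `t_x`
rows and `t_y` columns with `t = t_x + t_y ≤ min{m,n}`, the number of matrices
supported on these lines whose unique minimal cover is exactly the chosen set of
`t` lines is at least
`q^{t_x t_y}·(q^{n−t_y} − (q−1)(n−t) − q^{t_x})^{t_x}·(q^{m−t_x} − (q−1)(m−t) − q^{t_y})^{t_y}`. -/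
theorem unique_minimal_cover_count {F : Type*} [Field F] [Fintype F]
    {q m n tx ty t : ℕ} (hq : Fintype.card F = q) (ht : t = tx + ty)
    (htm : t ≤ m) (htn : t ≤ n)
    (Rows : Finset (Fin m)) (Cols : Finset (Fin n))
    (hRows : Rows.card = tx) (hCols : Cols.card = ty) :
    (q : ℤ) ^ (tx * ty) *
        ((q : ℤ) ^ (n - ty) - ((q : ℤ) - 1) * ((n : ℤ) - t) - (q : ℤ) ^ tx) ^ tx *
        ((q : ℤ) ^ (m - tx) - ((q : ℤ) - 1) * ((m : ℤ) - t) - (q : ℤ) ^ ty) ^ ty ≤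
      (Nat.card {E : Matrix (Fin m) (Fin n) F |
          IsCover E (lineSet Rows Cols) ∧ coverWt E = t ∧
          ∀ S : Finset (Fin m ⊕ Fin n), IsCover E S → S.card = t →
            S = lineSet Rows Cols} : ℤ) := by
  subst hq ht hRows hCols
  have h := unique_minimal_cover_count_general (F := F) Rows Cols (by simpa) (by simpa)
  simpa only [Nat.card_coe_set_eq, isUniqueMinCover_iff, ← lineSet_eq_disjSum, card_lineSet,
    Fintype.card_fin] using h
end
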